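/- For every tempered distribution T ∈ S′(ℝ^d) there exist a constant C ∈ ℝ and m ∈ ℕ such that |T(h_β)| ≤ C (2|β|+d)^m for all β ∈ ℕ^d; that is, the sequence of Hermite coefficients of a tempered distribution has polynomial growth. -/

import Mathlib

open MeasureTheory

noncomputable def hermitePoly (n : ℕ) (x : ℝ) : ℝ :=
  (-1 : ℝ) ^ n * Real.exp (x ^ 2 / 2) *
    iteratedDeriv n (fun y : ℝ => Real.exp (-(y ^ 2 / 2))) x

noncomputable def hermiteFun (n : ℕ) (x : ℝ) : ℝ :=
  (Real.sqrt (Real.sqrt (2 * Real.pi) * n.factorial))⁻¹ *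
    Real.exp (-(x ^ 2 / 4)) * hermitePoly n x

noncomputable def hermiteFunMulti (d : ℕ) (α : Fin d → ℕ) (x : EuclideanSpace ℝ (Fin d)) : ℝ :=
  ∏ i, hermiteFun (α i) (x i)


lemma hf_derivative_hermite (n : ℕ) :
    Polynomial.derivative (Polynomial.hermite (n+1)) =
      ((n+1 : ℕ) : Polynomial ℤ) * Polynomial.hermite n := by
  induction n with
  | zero => simp
  | succ n ih =>
    rw [Polynomial.hermite_succ (n+1), ih]
    simp only [Polynomial.derivative_sub, Polynomial.derivative_mul, Polynomial.derivative_X, ih,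
      Polynomial.derivative_natCast]
    rw [Polynomial.hermite_succ n]
    push_cast
    ring

lemma hf_poly (n : ℕ) (x : ℝ) :
    hermitePoly n x = Polynomial.aeval x (Polynomial.hermite n) := by
  rw [Polynomial.hermite_eq_deriv_gaussian', hermitePoly, iteratedDeriv_eq_iterate]
  ring

noncomputable def hfc (n : ℕ) : ℝ := (Real.sqrt (Real.sqrt (2 * Real.pi) * n.factorial))⁻¹

lemma hfc_succ (n : ℕ) : hfc n = Real.sqrt (n+1) * hfc (n+1) := by
  unfold hfc
  have h1 : (0:ℝ) < Real.sqrt (2 * Real.pi) := by positivity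
  have h2 : (0:ℝ) < n.factorial := by positivity
  have h3 : Real.sqrt (2 * Real.pi) * ((n+1).factorial : ℝ)
      = ((n:ℝ)+1) * (Real.sqrt (2 * Real.pi) * n.factorial) := by
    rw [Nat.factorial_succ]; push_cast; ring
  rw [h3, Real.sqrt_mul (show (0:ℝ) ≤ (n:ℝ)+1 by positivity)]
  have h4 : (0:ℝ) < Real.sqrt ((n:ℝ)+1) := by positivity
  rw [mul_inv, ← mul_assoc, mul_inv_cancel₀ h4.ne', one_mul]

lemma hf_eq (n : ℕ) (x : ℝ) : hermiteFun n x = hfc n *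
    Real.exp (-(x ^ 2 / 4)) * Polynomial.aeval x (Polynomial.hermite n) := by
  rw [hermiteFun, hf_poly, hfc]

lemma hf_sqrt_sq (n : ℕ) : Real.sqrt ((n:ℝ)+1) * Real.sqrt ((n:ℝ)+1) = n + 1 :=
  Real.mul_self_sqrt (by positivity)

lemma hf_deriv_up (n : ℕ) (x : ℝ) : HasDerivAt (hermiteFun n)
    (x / 2 * hermiteFun n x - Real.sqrt (n+1) * hermiteFun (n+1) x) x := by
  have h0 : hermiteFun n = fun x => hfc n *
    Real.exp (-(x ^ 2 / 4)) * Polynomial.aeval x (Polynomial.hermite n) := funext (hf_eq n)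
  have h1 : HasDerivAt (fun x : ℝ => Real.exp (-(x^2/4)))
      (Real.exp (-(x ^ 2 / 4)) * (-(x/2))) x := by
    have : HasDerivAt (fun x : ℝ => -(x^2/4)) (-(x/2)) x := by
      have := ((hasDerivAt_pow 2 x).div_const 4).neg
      refine HasDerivAt.congr_deriv this ?_
      norm_num; ring
    exact this.exp
  have h2 := (h1.const_mul (hfc n)).mul (Polynomial.hasDerivAt_aeval (Polynomial.hermite n) x)
  rw [hf_eq, hf_eq, Polynomial.hermite_succ, h0]
  refine HasDerivAt.congr_deriv h2 ?_
  simp only [map_sub, map_mul, Polynomial.aeval_X]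
  rw [hfc_succ n]
  ring

lemma hf_rec (n : ℕ) (x : ℝ) : x * hermiteFun n x =
    Real.sqrt n * hermiteFun (n-1) x + Real.sqrt (n+1) * hermiteFun (n+1) x := by
  rcases n with _ | n
  · rw [hf_eq, hf_eq, hfc_succ 0]
    simp
    ring
  · simp only [Nat.add_sub_cancel, Nat.cast_add, Nat.cast_one]
    rw [hf_eq, hf_eq, hf_eq, Polynomial.hermite_succ (n+1), hf_derivative_hermite, hfc_succ n,
      hfc_succ (n+1)]
    simp only [map_sub, map_mul, Polynomial.aeval_X, map_natCast]
    push_cast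
    linear_combination (- Real.sqrt (n+1+1) * hfc (n+1+1) * Real.exp (-(x ^ 2 / 4)) * Polynomial.aeval x (Polynomial.hermite n)) * hf_sqrt_sq n

lemma hf_deriv (n : ℕ) (x : ℝ) : HasDerivAt (hermiteFun n)
    (Real.sqrt n / 2 * hermiteFun (n-1) x - Real.sqrt (n+1) / 2 * hermiteFun (n+1) x) x := by
  convert hf_deriv_up n x using 1
  linear_combination (-1/2) * hf_rec n x

/-- The energy `2 * ∑_{k<n} h_k^2 + h_n^2`. -/
noncomputable def hfS : ℕ → ℝ → ℝ
  | 0 => fun x => hermiteFun 0 x ^ 2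
  | n+1 => fun x => hfS n x + hermiteFun n x ^ 2 + hermiteFun (n+1) x ^ 2

lemma hfS_deriv (n : ℕ) (x : ℝ) : HasDerivAt (hfS n) (-x * hermiteFun n x ^ 2) x := by
  induction n with
  | zero =>
    have h := (hf_deriv_up 0 x).pow 2
    have hr := hf_rec 0 x
    refine HasDerivAt.congr_deriv h ?_
    simp at hr ⊢
    linear_combination (2 * hermiteFun 0 x) * hr
  | succ n ih =>
    have h := (ih.add ((hf_deriv_up n x).pow 2)).add ((hf_deriv (n+1) x).pow 2)
    have hr := hf_rec (n+1) x
    refine HasDerivAt.congr_deriv h ?_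
    simp at hr ⊢
    linear_combination (hermiteFun (n+1) x) * hr

lemma hf_zero_le (n : ℕ) : hermiteFun n 0 ^ 2 ≤ 1 ∧ hermiteFun (n+1) 0 ^ 2 ≤ 1 := by
  induction n with
  | zero =>
    have hr : hermiteFun 1 0 = 0 := by
      have hr := hf_rec 0 0
      simpa using hr.symm
    rw [zero_add, hr]
    refine ⟨?_, by norm_num⟩
    rw [hf_eq, hfc]
    have hq : 1 ≤ √(√(2 * Real.pi) * (Nat.factorial 0 : ℝ)) := by
      rw [Real.one_le_sqrt, Nat.factorial_zero, Nat.cast_one, mul_one, Real.one_le_sqrt]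
      linarith [Real.pi_gt_three]
    have hq2 := inv_le_one_of_one_le₀ hq
    have hq3 : 0 ≤ (√(√(2 * Real.pi) * (Nat.factorial 0 : ℝ)))⁻¹ := by positivity
    rw [Polynomial.hermite_zero]
    norm_num only [map_one, Polynomial.C_1, mul_one, neg_zero, zero_pow, Real.exp_zero, zero_div]
      at hq2 hq3 ⊢
    exact pow_le_one₀ hq3 hq2
  | succ n ih =>
    refine ⟨ih.2, ?_⟩
    have hr := hf_rec (n+1) 0
    simp at hr
    have e : ((n:ℝ)+1+1) * hermiteFun (n+1+1) 0 ^ 2 = (n+1) * hermiteFun n 0 ^ 2 := by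
      have a1 := Real.sq_sqrt (show (0:ℝ) ≤ n+1 by positivity)
      have a2 := Real.sq_sqrt (show (0:ℝ) ≤ n+1+1 by positivity)
      have a3 : √((n:ℝ) + 1 + 1) * hermiteFun (n + 1 + 1) 0 =
        - (√((n:ℝ) + 1) * hermiteFun n 0) := by linarith
      have a4 := congrArg (fun y => y ^ 2) a3
      simp only [mul_pow, neg_sq, a1, a2] at a4
      exact a4
    have hn : (0:ℝ) ≤ n := by positivity
    by_contra hc
    push Not at hc
    nlinarith [ih.1]

lemma hfS_zero_le (n : ℕ) : hfS n 0 ≤ 2 * n + 1 := by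
  induction n with
  | zero => simpa [hfS] using (hf_zero_le 0).1
  | succ n ih =>
    simp only [hfS]
    push_cast
    linarith [hf_zero_le n]

lemma hf_sq_le_S (n : ℕ) (x : ℝ) : hermiteFun n x ^ 2 ≤ hfS n x := by
  have h0 : ∀ n, 0 ≤ hfS n x := by
    intro n
    induction n with
    | zero => simp only [hfS]; positivity
    | succ n ih => simp only [hfS]; positivity
  rcases n with _ | n
  · simp only [hfS]; exact le_rfl
  · simp only [hfS]
    nlinarith [h0 n, sq_nonneg (hermiteFun n x)]

lemma hfS_le (n : ℕ) (x : ℝ) : hfS n x ≤ hfS n 0 := by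
  have hc : Continuous (hfS n) :=
    continuous_iff_continuousAt.2 fun y => (hfS_deriv n y).continuousAt
  rcases le_total 0 x with hx | hx
  · have : AntitoneOn (hfS n) (Set.Ici 0) := by
      apply antitoneOn_of_deriv_nonpos (convex_Ici 0) hc.continuousOn
      · exact fun y _ => (hfS_deriv n y).differentiableAt.differentiableWithinAt
      · intro y hy
        rw [(hfS_deriv n y).deriv]
        simp at hy
        nlinarith [sq_nonneg (hermiteFun n y)]
    exact this (by simp) (by simpa using hx) hx
  · have : MonotoneOn (hfS n) (Set.Iic 0) := by
      apply monotoneOn_of_deriv_nonneg (convex_Iic 0) hc.continuousOn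
      · exact fun y _ => (hfS_deriv n y).differentiableAt.differentiableWithinAt
      · intro y hy
        rw [(hfS_deriv n y).deriv]
        simp at hy
        nlinarith [sq_nonneg (hermiteFun n y)]
    exact this (by simpa using hx) (by simp) hx

lemma hf_abs_le (n : ℕ) (x : ℝ) : |hermiteFun n x| ≤ 2 * n + 1 := by
  have h := (hf_sq_le_S n x).trans ((hfS_le n x).trans (hfS_zero_le n))
  have hn : (0:ℝ) ≤ n := by positivity
  refine abs_le_of_sq_le_sq ?_ (by positivity)
  nlinarith

/-- Weight of a multi-index. -/
noncomputable def hfW {d : ℕ} (β : Fin d → ℕ) : ℝ := (∑ i, (β i : ℝ)) + 1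

lemma hfW_one_le {d : ℕ} (β : Fin d → ℕ) : 1 ≤ hfW β := by
  unfold hfW
  have : 0 ≤ ∑ i, (β i : ℝ) := Finset.sum_nonneg fun i _ => by positivity
  linarith

lemma hf_le_W {d : ℕ} (β : Fin d → ℕ) (i : Fin d) : (β i : ℝ) + 1 ≤ hfW β := by
  unfold hfW
  have := Finset.single_le_sum (f := fun i => (β i : ℝ)) (fun i _ => by positivity)
    (Finset.mem_univ i)
  linarith

lemma hf_sqrt_le_W {d : ℕ} (β : Fin d → ℕ) (i : Fin d) :
    Real.sqrt (β i) ≤ hfW β ∧ Real.sqrt (β i + 1) ≤ hfW β := by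
  have h1 := hf_le_W β i
  have h2 : (0:ℝ) ≤ β i := by positivity
  have h3 : Real.sqrt (β i + 1) ≤ β i + 1 := by
    rw [Real.sqrt_le_left (by positivity)]
    nlinarith
  have h4 : Real.sqrt (β i) ≤ Real.sqrt (β i + 1) := Real.sqrt_le_sqrt (by linarith)
  constructor <;> linarith

lemma hfW_update {d : ℕ} (β : Fin d → ℕ) (i : Fin d) (k : ℕ) (hk : k ≤ β i + 1) :
    hfW (Function.update β i k) ≤ 2 * hfW β := by
  have h : hfW (Function.update β i k) ≤ hfW β + 1 := by
    unfold hfW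
    rw [← Finset.add_sum_erase _ _ (Finset.mem_univ i),
      ← Finset.add_sum_erase _ (fun i => (β i : ℝ)) (Finset.mem_univ i)]
    have e : ∑ x ∈ Finset.univ.erase i, (Function.update β i k x : ℝ) =
        ∑ x ∈ Finset.univ.erase i, (β x : ℝ) := by
      refine Finset.sum_congr rfl fun j hj => ?_
      rw [Function.update_of_ne (Finset.ne_of_mem_erase hj)]
    rw [e, Function.update_self]
    have : (k : ℝ) ≤ β i + 1 := by exact_mod_cast hk
    linarith
  linarith [hfW_one_le β]

/-- lowered / raised multi-indices -/
def hfdn {d : ℕ} (β : Fin d → ℕ) (i : Fin d) : Fin d → ℕ := Function.update β i (β i - 1)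
def hfup {d : ℕ} (β : Fin d → ℕ) (i : Fin d) : Fin d → ℕ := Function.update β i (β i + 1)

lemma hfm_update {d : ℕ} (β : Fin d → ℕ) (i : Fin d) (k : ℕ) (x : EuclideanSpace ℝ (Fin d)) :
    hermiteFunMulti d (Function.update β i k) x =
      (∏ j ∈ Finset.univ.erase i, hermiteFun (β j) (x j)) * hermiteFun k (x i) := by
  unfold hermiteFunMulti
  rw [← Finset.prod_erase_mul _ _ (Finset.mem_univ i), Function.update_self]
  congr 1
  refine Finset.prod_congr rfl fun j hj => ?_
  rw [Function.update_of_ne (Finset.ne_of_mem_erase hj)]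

lemma hfm_rec {d : ℕ} (β : Fin d → ℕ) (i : Fin d) (x : EuclideanSpace ℝ (Fin d)) :
    x i * hermiteFunMulti d β x = Real.sqrt (β i) * hermiteFunMulti d (hfdn β i) x
      + Real.sqrt (β i + 1) * hermiteFunMulti d (hfup β i) x := by
  rw [hfdn, hfup, hfm_update, hfm_update]
  have h := hfm_update β i (β i) x
  rw [Function.update_eq_self] at h
  rw [h]
  linear_combination (∏ j ∈ Finset.univ.erase i, hermiteFun (β j) (x j)) * hf_rec (β i) (x i)

lemma hfm_fderiv {d : ℕ} (β : Fin d → ℕ) (x : EuclideanSpace ℝ (Fin d)) :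
    HasFDerivAt (hermiteFunMulti d β)
      (∑ i, (Real.sqrt (β i) / 2 * hermiteFunMulti d (hfdn β i) x
      - Real.sqrt (β i + 1) / 2 * hermiteFunMulti d (hfup β i) x) •
        (EuclideanSpace.proj i : EuclideanSpace ℝ (Fin d) →L[ℝ] ℝ)) x := by
  have h : ∀ i ∈ (Finset.univ : Finset (Fin d)),
      HasFDerivAt (fun x : EuclideanSpace ℝ (Fin d) => hermiteFun (β i) (x i))
      ((Real.sqrt (β i) / 2 * hermiteFun (β i - 1) (x i)
        - Real.sqrt (β i + 1) / 2 * hermiteFun (β i + 1) (x i)) •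
        (EuclideanSpace.proj i : EuclideanSpace ℝ (Fin d) →L[ℝ] ℝ)) x := by
    intro i _
    exact (hf_deriv (β i) (x i)).comp_hasFDerivAt x
      (EuclideanSpace.proj i : EuclideanSpace ℝ (Fin d) →L[ℝ] ℝ).hasFDerivAt
  have h2 := HasFDerivAt.finsetProd h
  refine HasFDerivAt.congr_fderiv h2 ?_
  refine Finset.sum_congr rfl fun i _ => ?_
  rw [hfdn, hfup, hfm_update, hfm_update, smul_smul]
  congr 1
  ring

lemma hfm_abs_le {d : ℕ} (β : Fin d → ℕ) (x : EuclideanSpace ℝ (Fin d)) :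
    |hermiteFunMulti d β x| ≤ (2 * hfW β) ^ d := by
  unfold hermiteFunMulti
  rw [Finset.abs_prod]
  have : ∏ i, |hermiteFun (β i) (x i)| ≤ ∏ _i : Fin d, (2 * hfW β) := by
    refine Finset.prod_le_prod (fun i _ => abs_nonneg _) fun i _ => ?_
    linarith [hf_abs_le (β i) (x i), hf_le_W β i]
  simpa using this

lemma hf_step {d : ℕ} (A : (Fin d → ℕ) → ℝ) (C : ℝ) (hC : 0 ≤ C) (m : ℕ)
    (hA0 : ∀ β, 0 ≤ A β)
    (hA : ∀ β, A β ≤ C * hfW β ^ m) (β : Fin d → ℕ) :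
    ∑ i, (Real.sqrt (β i) * A (hfdn β i) + Real.sqrt (β i + 1) * A (hfup β i))
      ≤ (2 * d * C * 2 ^ m) * hfW β ^ (m+1) := by
  have hW := hfW_one_le β
  have key : ∀ i ∈ (Finset.univ : Finset (Fin d)),
      (Real.sqrt (β i) * A (hfdn β i) + Real.sqrt (β i + 1) * A (hfup β i))
      ≤ 2 * (hfW β * (C * (2 * hfW β) ^ m)) := by
    intro i _
    have b1 : A (hfdn β i) ≤ C * (2 * hfW β) ^ m := by
      refine (hA _).trans ?_
      have := hfW_update β i (β i - 1) (by omega)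
      have := hfW_one_le (hfdn β i)
      gcongr
      assumption
    have b2 : A (hfup β i) ≤ C * (2 * hfW β) ^ m := by
      refine (hA _).trans ?_
      have := hfW_update β i (β i + 1) (by omega)
      have := hfW_one_le (hfup β i)
      gcongr
      assumption
    have c := hf_sqrt_le_W β i
    have e1 := mul_le_mul c.1 b1 (hA0 _) (by linarith)
    have e2 := mul_le_mul c.2 b2 (hA0 _) (by linarith)
    linarith
  refine (Finset.sum_le_card_nsmul _ _ _ key).trans (le_of_eq ?_)
  simp only [Finset.card_univ, Fintype.card_fin, nsmul_eq_mul, mul_pow, pow_succ]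
  ring

lemma hf_norm_le {d : ℕ} (x : EuclideanSpace ℝ (Fin d)) : ‖x‖ ≤ ∑ i, |x i| := by
  rw [EuclideanSpace.norm_eq]
  apply Real.sqrt_le_iff.2
  refine ⟨Finset.sum_nonneg fun i _ => abs_nonneg _, ?_⟩
  simp only [Real.norm_eq_abs]
  exact Finset.sum_sq_le_sq_sum_of_nonneg fun i _ => abs_nonneg _

lemma hf_bound_zero {d : ℕ} (k : ℕ) : ∃ C : ℝ, 0 ≤ C ∧ ∃ m : ℕ, ∀ (β : Fin d → ℕ)
    (x : EuclideanSpace ℝ (Fin d)), ‖x‖ ^ k * |hermiteFunMulti d β x| ≤ C * hfW β ^ m := by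
  induction k with
  | zero =>
    refine ⟨2 ^ d, by positivity, d, fun β x => ?_⟩
    have := hfm_abs_le β x
    rw [mul_pow] at this
    simpa using this
  | succ k ih =>
    obtain ⟨C, hC, m, h⟩ := ih
    refine ⟨2 * d * C * 2 ^ m, by positivity, m+1, fun β x => ?_⟩
    refine le_trans ?_ (hf_step (fun β => ‖x‖ ^ k * |hermiteFunMulti d β x|) C hC m
      (fun β => by positivity) (fun β => h β x) β)
    calc ‖x‖ ^ (k+1) * |hermiteFunMulti d β x|
        = ‖x‖ * (‖x‖ ^ k * |hermiteFunMulti d β x|) := by ring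
      _ ≤ (∑ i, |x i|) * (‖x‖ ^ k * |hermiteFunMulti d β x|) := by
          gcongr; exact hf_norm_le x
      _ = ∑ i, ‖x‖ ^ k * |x i * hermiteFunMulti d β x| := by
          rw [Finset.sum_mul]
          refine Finset.sum_congr rfl fun i _ => ?_
          rw [abs_mul]; ring
      _ ≤ _ := by
          refine Finset.sum_le_sum fun i _ => ?_
          rw [hfm_rec]
          have := abs_add_le (Real.sqrt (β i) * hermiteFunMulti d (hfdn β i) x)
            (Real.sqrt (β i + 1) * hermiteFunMulti d (hfup β i) x)
          rw [abs_mul, abs_mul, abs_of_nonneg (Real.sqrt_nonneg _),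
            abs_of_nonneg (Real.sqrt_nonneg _)] at this
          calc _ ≤ ‖x‖ ^ k * _ := mul_le_mul_of_nonneg_left this (by positivity)
            _ = _ := by ring

lemma hf_bound {d : ℕ} (hs : ∀ (β : Fin d → ℕ) (n : ℕ), ContDiff ℝ n (hermiteFunMulti d β))
    (k n : ℕ) : ∃ C : ℝ, 0 ≤ C ∧ ∃ m : ℕ, ∀ (β : Fin d → ℕ)
    (x : EuclideanSpace ℝ (Fin d)),
      ‖x‖ ^ k * ‖iteratedFDeriv ℝ n (hermiteFunMulti d β) x‖ ≤ C * hfW β ^ m := by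
  induction n with
  | zero => simpa using hf_bound_zero k
  | succ n ih =>
    obtain ⟨C, hC, m, h⟩ := ih
    refine ⟨2 * d * C * 2 ^ m, by positivity, m+1, fun β x => ?_⟩
    refine le_trans ?_ (hf_step (fun β => ‖x‖ ^ k * ‖iteratedFDeriv ℝ n (hermiteFunMulti d β) x‖)
      C hC m (fun β => by positivity) (fun β => h β x) β)
    have e : fderiv ℝ (hermiteFunMulti d β) = ∑ i,
        (ContinuousLinearMap.toSpanSingleton ℝ
          (EuclideanSpace.proj i : EuclideanSpace ℝ (Fin d) →L[ℝ] ℝ)) ∘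
        ((Real.sqrt (β i) / 2) • hermiteFunMulti d (hfdn β i)
          - (Real.sqrt (β i + 1) / 2) • hermiteFunMulti d (hfup β i)) := by
      funext y
      rw [(hfm_fderiv β y).fderiv, Finset.sum_apply]
      rfl
    have hs1 : ∀ i, ContDiff ℝ n ((Real.sqrt (β i) / 2) • hermiteFunMulti d (hfdn β i)) :=
      fun i => contDiff_const.smul (hs _ n)
    have hs2 : ∀ i, ContDiff ℝ n ((Real.sqrt (β i + 1) / 2) • hermiteFunMulti d (hfup β i)) :=
      fun i => contDiff_const.smul (hs _ n)
    have hs3 : ∀ i, ContDiff ℝ n ((Real.sqrt (β i) / 2) • hermiteFunMulti d (hfdn β i)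
          - (Real.sqrt (β i + 1) / 2) • hermiteFunMulti d (hfup β i)) :=
      fun i => (hs1 i).sub (hs2 i)
    rw [← norm_iteratedFDeriv_fderiv, e, iteratedFDeriv_sum_apply (fun i _ =>
      ((ContinuousLinearMap.contDiff _).comp (hs3 i)).contDiffAt)]
    calc _ ≤ ‖x‖ ^ k * ∑ i, _ := mul_le_mul_of_nonneg_left (norm_sum_le _ _) (by positivity)
      _ = ∑ i, ‖x‖ ^ k * _ := Finset.mul_sum _ _ _
      _ ≤ _ := ?_
    refine Finset.sum_le_sum fun i _ => ?_
    have hp : ‖(EuclideanSpace.proj i : EuclideanSpace ℝ (Fin d) →L[ℝ] ℝ)‖ ≤ 1 := by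
      refine ContinuousLinearMap.opNorm_le_bound _ zero_le_one fun y => ?_
      rw [one_mul]
      exact PiLp.norm_apply_le y i
    have b := ContinuousLinearMap.norm_iteratedFDeriv_comp_left (ContinuousLinearMap.toSpanSingleton ℝ
          (EuclideanSpace.proj i : EuclideanSpace ℝ (Fin d) →L[ℝ] ℝ)) (x := x) (n := n)
          (hs3 i).contDiffAt le_rfl
    rw [ContinuousLinearMap.norm_toSpanSingleton] at b
    have b2 : ‖iteratedFDeriv ℝ n ((Real.sqrt (β i) / 2) • hermiteFunMulti d (hfdn β i)
          - (Real.sqrt (β i + 1) / 2) • hermiteFunMulti d (hfup β i)) x‖ ≤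
        Real.sqrt (β i) * ‖iteratedFDeriv ℝ n (hermiteFunMulti d (hfdn β i)) x‖ +
        Real.sqrt (β i + 1) * ‖iteratedFDeriv ℝ n (hermiteFunMulti d (hfup β i)) x‖ := by
      rw [iteratedFDeriv_sub_apply (hs1 i).contDiffAt (hs2 i).contDiffAt,
        iteratedFDeriv_const_smul_apply (hs _ n).contDiffAt,
        iteratedFDeriv_const_smul_apply (hs _ n).contDiffAt]
      refine (norm_sub_le _ _).trans ?_
      rw [norm_smul, norm_smul, Real.norm_of_nonneg (by positivity),
        Real.norm_of_nonneg (by positivity)]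
      gcongr <;> exact half_le_self (Real.sqrt_nonneg _)
    have b3 := b.trans ((mul_le_of_le_one_left (norm_nonneg _) hp).trans b2)
    calc _ ≤ ‖x‖ ^ k * _ := mul_le_mul_of_nonneg_left b3 (by positivity)
      _ = _ := by ring

/-- The Hermite coefficients of a tempered distribution have polynomial growth:
there exist `C` and `m` with `|T(h_β)| ≤ C (2|β|+d)^m` for all `β`. -/
theorem tempered_distribution_hermite_coeff_poly_growth (d : ℕ)
    (h : (Fin d → ℕ) → SchwartzMap (EuclideanSpace ℝ (Fin d)) ℝ)
    (hh : ∀ β x, h β x = hermiteFunMulti d β x)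
    (T : SchwartzMap (EuclideanSpace ℝ (Fin d)) ℝ →L[ℝ] ℝ) :
    ∃ C : ℝ, ∃ m : ℕ, ∀ β : Fin d → ℕ,
      |T (h β)| ≤ C * (((2 * ∑ i, β i) + d : ℕ) : ℝ) ^ m := by
  rcases Nat.eq_zero_or_pos d with rfl | hd
  · refine ⟨|T (h 0)|, 0, fun β => ?_⟩
    rw [Subsingleton.elim β 0]
    simp
  have hfun : ∀ β, (h β : EuclideanSpace ℝ (Fin d) → ℝ) = hermiteFunMulti d β :=
    fun β => funext (hh β)
  have hs : ∀ (β : Fin d → ℕ) (n : ℕ), ContDiff ℝ n (hermiteFunMulti d β) := by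
    intro β n
    rw [← hfun]
    exact (h β).smooth n
  obtain ⟨s, C, -, hC⟩ := Seminorm.bound_of_continuous
    (schwartz_withSeminorms ℝ (EuclideanSpace ℝ (Fin d)) ℝ)
    ((normSeminorm ℝ ℝ).comp T.toLinearMap) (continuous_norm.comp T.continuous)
  choose B hB0 M hM using fun p : ℕ × ℕ => hf_bound hs p.1 p.2
  refine ⟨C * ∑ p ∈ s, B p, ∑ p ∈ s, M p, fun β => ?_⟩
  set N : ℝ := (((2 * ∑ i, β i) + d : ℕ) : ℝ) with hN
  have hW1 := hfW_one_le β
  have hWN : hfW β ≤ N := by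
    rw [hN, hfW]
    have h0 : (0:ℝ) ≤ ∑ i, (β i : ℝ) := Finset.sum_nonneg fun i _ => by positivity
    have h1 : (1:ℝ) ≤ d := by exact_mod_cast hd
    push_cast
    linarith
  have h1 := hC (h β)
  have h2 : (s.sup (schwartzSeminormFamily ℝ (EuclideanSpace ℝ (Fin d)) ℝ)) (h β) ≤
      ∑ p ∈ s, schwartzSeminormFamily ℝ (EuclideanSpace ℝ (Fin d)) ℝ p (h β) := by
    have := Seminorm.finset_sup_le_sum
      (schwartzSeminormFamily ℝ (EuclideanSpace ℝ (Fin d)) ℝ) s (h β)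
    simpa using this
  have h3 : ∑ p ∈ s, schwartzSeminormFamily ℝ (EuclideanSpace ℝ (Fin d)) ℝ p (h β) ≤
      ∑ p ∈ s, B p * N ^ (∑ p ∈ s, M p) := by
    refine Finset.sum_le_sum fun p hp => ?_
    have hMp : M p ≤ ∑ p ∈ s, M p := Finset.single_le_sum (fun _ _ => Nat.zero_le _) hp
    have hb : B p * hfW β ^ M p ≤ B p * N ^ (∑ p ∈ s, M p) := by
      refine mul_le_mul_of_nonneg_left ?_ (hB0 p)
      exact (pow_le_pow_left₀ (by linarith) hWN _).trans (pow_le_pow_right₀ (by linarith) hMp)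
    refine le_trans ?_ hb
    have hpos : 0 ≤ B p * hfW β ^ M p :=
      mul_nonneg (hB0 p) (pow_nonneg (by linarith) _)
    refine SchwartzMap.seminorm_le_bound ℝ p.1 p.2 (h β) hpos fun x => ?_
    rw [hfun]
    exact hM p β x
  rw [← Finset.sum_mul] at h3
  have h4 : |T (h β)| ≤ C * (s.sup (schwartzSeminormFamily ℝ (EuclideanSpace ℝ (Fin d)) ℝ)) (h β) :=
    h1
  rw [mul_assoc]
  exact h4.trans (mul_le_mul_of_nonneg_left (h2.trans h3) C.coe_nonneg)
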